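/- Let α ∈ ℂ. If both α and e^{2π√(-1) α} are algebraic over ℚ, then α is a rational number. -/

import Mathlib

/-!
Schneider's method. Suppose that `α`, `β = exp l` and `γ = exp (l * α)` lie in a number field and
that `α` is irrational, so that the points `s + t * α` with `s, t : ℕ` are distinct. For each large
`N`, Siegel's lemma provides a nonzero polynomial `P`, of degree less than `N ^ 3` in its first
variable and less than `2 * N` in its second, with small algebraic integer coefficients, such that
`F z = P (z, exp (l * z))` vanishes at `s + t * α` for `s, t < N ^ 2`. As `F` is a nonzero function
of exponential type, it cannot vanish at all these points; let `M ≥ N ^ 2` be the largest integer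
such that it vanishes for all `s, t < M`, and let `w` be a nonzero value of `F` with `s, t ≤ M`.
The `M ^ 2` zeros and the Schwarz lemma give `‖w‖ ≤ M ^ (O (N * M)) / 2 ^ M ^ 2`, whereas `w` is a
polynomial in `α`, `β`, `γ` of controlled size and denominator, so that its norm down to `ℚ` gives
`‖w‖ ≥ M ^ (-O (N * M))`. Since `N ≤ √M`, these bounds are incompatible for `N` large.
-/

open Filter Topology NumberField

namespace GelfondSchneider

section SchwarzLemma

variable {E : Type*} [NormedAddCommGroup E] [NormedSpace ℂ E] [CompleteSpace E]

theorem exists_differentiable_eq_prod_sub_smul (Z : Finset ℂ) {F : ℂ → E}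
    (hF : Differentiable ℂ F) (hZ : ∀ a ∈ Z, F a = 0) :
    ∃ G : ℂ → E, Differentiable ℂ G ∧ ∀ z, F z = (∏ a ∈ Z, (z - a)) • G z := by
  induction Z using Finset.induction_on generalizing F with
  | empty => exact ⟨F, hF, by simp⟩
  | insert a Z ha ih =>
    have hslope : Differentiable ℂ (dslope F a) := by
      rw [← differentiableOn_univ]
      exact (Complex.differentiableOn_dslope univ_mem).2 hF.differentiableOn
    have hF_eq (z : ℂ) : F z = (z - a) • dslope F a z := by
      rw [sub_smul_dslope, hZ a (Finset.mem_insert_self a Z), sub_zero]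
    have hslope_zero : ∀ b ∈ Z, dslope F a b = 0 := fun b hb ↦ by
      have hba : b - a ≠ 0 := sub_ne_zero.2 (ne_of_mem_of_not_mem hb ha)
      refine (smul_eq_zero.1 ?_).resolve_left hba
      rw [← hF_eq, hZ b (Finset.mem_insert_of_mem hb)]
    obtain ⟨G, hG, hG_eq⟩ := ih hslope hslope_zero
    exact ⟨G, hG, fun z ↦ by rw [hF_eq, hG_eq, smul_smul, Finset.prod_insert ha]⟩

theorem norm_mul_pow_card_le_of_eq_zero {Z : Finset ℂ} {F : ℂ → E} {r R C : ℝ} {w : ℂ}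
    (hF : Differentiable ℂ F) (hZ : ∀ a ∈ Z, F a = 0) (hrR : r < R) (hZr : ∀ a ∈ Z, ‖a‖ ≤ r)
    (hw : ‖w‖ ≤ r) (hC : ∀ z, ‖z‖ = R → ‖F z‖ ≤ C) :
    ‖F w‖ * (R - r) ^ Z.card ≤ C * (2 * r) ^ Z.card := by
  obtain ⟨G, hG, hFG⟩ := exists_differentiable_eq_prod_sub_smul Z hF hZ
  have hr : 0 ≤ r := (norm_nonneg w).trans hw
  have hgap : 0 < R - r := sub_pos.2 hrR
  have hG_circle : ∀ z ∈ frontier (Metric.ball (0 : ℂ) R), ‖G z‖ ≤ C / (R - r) ^ Z.card := by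
    intro z hz
    rw [frontier_ball _ (hr.trans_lt hrR).ne', mem_sphere_zero_iff_norm] at hz
    have hprod : (R - r) ^ Z.card ≤ ‖∏ a ∈ Z, (z - a)‖ := by
      rw [norm_prod, ← Finset.prod_const]
      refine Finset.prod_le_prod (fun _ _ ↦ hgap.le) fun a ha ↦ ?_
      linarith [norm_sub_norm_le z a, hZr a ha]
    rw [le_div_iff₀ (by positivity)]
    calc ‖G z‖ * (R - r) ^ Z.card ≤ ‖G z‖ * ‖∏ a ∈ Z, (z - a)‖ := by gcongr
      _ = ‖F z‖ := by rw [hFG, norm_smul, mul_comm]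
      _ ≤ C := hC z hz
  have hGw : ‖G w‖ ≤ C / (R - r) ^ Z.card :=
    Complex.norm_le_of_forall_mem_frontier_norm_le Metric.isBounded_ball hG.diffContOnCl hG_circle
      (subset_closure (mem_ball_zero_iff.2 (hw.trans_lt hrR)))
  have hprod : ‖∏ a ∈ Z, (w - a)‖ ≤ (2 * r) ^ Z.card := by
    rw [norm_prod, ← Finset.prod_const]
    refine Finset.prod_le_prod (fun _ _ ↦ norm_nonneg _) fun a ha ↦ ?_
    linarith [norm_sub_le w a, hZr a ha]
  rw [le_div_iff₀ (by positivity)] at hGw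
  calc ‖F w‖ * (R - r) ^ Z.card = ‖∏ a ∈ Z, (w - a)‖ * (‖G w‖ * (R - r) ^ Z.card) := by
        rw [hFG, norm_smul, mul_assoc]
    _ ≤ (2 * r) ^ Z.card * C := by
        gcongr
    _ = C * (2 * r) ^ Z.card := mul_comm _ _

end SchwarzLemma

section Grid

theorem injective_natCast_add_natCast_mul {K : Type*} [Field K] [CharZero K] {α : K}
    (hα : ∀ q : ℚ, α ≠ q) : Function.Injective fun p : ℕ × ℕ ↦ (p.1 + p.2 * α : K) := by
  rintro ⟨s, t⟩ ⟨s', t'⟩ h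
  dsimp only at h
  obtain rfl : t = t' := by
    by_contra ht
    have ht' : (t - t' : K) ≠ 0 := sub_ne_zero.2 (Nat.cast_injective.ne ht)
    refine hα ((s' - s) / (t - t')) ?_
    push_cast
    rw [eq_div_iff ht']
    linear_combination h
  simpa using h

theorem norm_natCast_add_natCast_mul_le {R : Type*} [SeminormedRing R] [NormOneClass R] (α : R)
    {s t M : ℕ} (hs : s ≤ M) (ht : t ≤ M) : ‖(s + t * α : R)‖ ≤ M * (1 + ‖α‖) := by
  have norm_natCast_le {n : ℕ} (hn : n ≤ M) : ‖(n : R)‖ ≤ M := by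
    calc ‖(n : R)‖ ≤ n := by simpa using Nat.norm_cast_le (α := R) n
      _ ≤ M := by exact_mod_cast hn
  calc ‖(s + t * α : R)‖ ≤ ‖(s : R)‖ + ‖(t : R)‖ * ‖α‖ :=
        norm_add_le_of_le le_rfl (norm_mul_le _ _)
    _ ≤ M + M * ‖α‖ := by gcongr <;> exact norm_natCast_le ‹_›
    _ = M * (1 + ‖α‖) := by ring

variable {E : Type*} [NormedAddCommGroup E] [NormedSpace ℂ E] [CompleteSpace E]

-- The radii in the ratio `1 : 5` turn `(R - r) / (2 * r)` into `2`.
theorem norm_mul_two_pow_sq_le_of_eq_zero_on_grid {F : ℂ → E} {α w : ℂ} {M : ℕ} {C : ℝ}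
    (hF : Differentiable ℂ F) (hα : ∀ q : ℚ, α ≠ q) (hM : 0 < M)
    (hgrid : ∀ s < M, ∀ t < M, F (s + t * α) = 0) (hw : ‖w‖ ≤ M * (1 + ‖α‖))
    (hC : ∀ z, ‖z‖ = 5 * (M * (1 + ‖α‖)) → ‖F z‖ ≤ C) : ‖F w‖ * 2 ^ M ^ 2 ≤ C := by
  classical
  set r : ℝ := M * (1 + ‖α‖)
  have hr : 0 < r := by positivity
  let Z : Finset ℂ :=
    (Finset.range M ×ˢ Finset.range M).image fun p : ℕ × ℕ ↦ (p.1 + p.2 * α : ℂ)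
  have hZ_card : Z.card = M ^ 2 := by
    rw [Finset.card_image_of_injective _ (injective_natCast_add_natCast_mul hα),
      Finset.card_product, Finset.card_range, sq]
  have hZ_forall {P : ℂ → Prop} (hP : ∀ s < M, ∀ t < M, P (s + t * α)) : ∀ a ∈ Z, P a := by
    simpa [Z] using fun a s t hs ht h ↦ h ▸ hP s hs t ht
  have hschwarz := norm_mul_pow_card_le_of_eq_zero hF (hZ_forall hgrid) (by linarith : r < 5 * r)
    (hZ_forall fun s hs t ht ↦ norm_natCast_add_natCast_mul_le α hs.le ht.le) hw hC
  have hgap : 5 * r - r = 2 * (2 * r) := by ring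
  rw [hZ_card, hgap, mul_pow, ← mul_assoc] at hschwarz
  exact le_of_mul_le_mul_right hschwarz (by positivity)

theorem tendsto_pow_div_two_pow_sq (b : ℝ) :
    Tendsto (fun M : ℕ ↦ b ^ M / 2 ^ M ^ 2) atTop (𝓝 0) := by
  have hratio : Tendsto (fun M : ℕ ↦ |b| / (2 : ℝ) ^ M) atTop (𝓝 0) :=
    tendsto_const_nhds.div_atTop (tendsto_pow_atTop_atTop_of_one_lt one_lt_two)
  refine squeeze_zero_norm' ?_
    (tendsto_pow_atTop_nhds_zero_of_lt_one (r := (1 / 2 : ℝ)) (by norm_num) (by norm_num))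
  filter_upwards [hratio.eventually_le_const (by norm_num : (0 : ℝ) < 1 / 2)] with M hM
  calc ‖b ^ M / 2 ^ M ^ 2‖ = (|b| / 2 ^ M) ^ M := by
        simp [div_pow, sq, pow_mul]
    _ ≤ (1 / 2) ^ M := by gcongr

theorem eq_zero_of_eq_zero_on_grid_of_norm_le_exp {F : ℂ → E} {α : ℂ} {A B : ℝ}
    (hF : Differentiable ℂ F) (hα : ∀ q : ℚ, α ≠ q) (hgrid : ∀ s t : ℕ, F (s + t * α) = 0)
    (hgrowth : ∀ z, ‖F z‖ ≤ A * Real.exp (B * ‖z‖)) : F = 0 := by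
  funext w
  let b := Real.exp (B * (5 * (1 + ‖α‖)))
  have hbound : ∀ᶠ M : ℕ in atTop, ‖F w‖ ≤ A * (b ^ M / 2 ^ M ^ 2) := by
    filter_upwards [eventually_gt_atTop 0, eventually_ge_atTop ⌈‖w‖⌉₊] with M hM hwM
    have hw : ‖w‖ ≤ M * (1 + ‖α‖) :=
      (Nat.ceil_le.1 hwM).trans (le_mul_of_one_le_right (by positivity) (by simp))
    rw [← mul_div_assoc, le_div_iff₀ (by positivity)]
    refine norm_mul_two_pow_sq_le_of_eq_zero_on_grid hF hα hM (fun s _ t _ ↦ hgrid s t) hw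
      fun z hz ↦ (hgrowth z).trans_eq ?_
    rw [hz, ← Real.exp_nat_mul]
    ring_nf
  have hlimit : Tendsto (fun M : ℕ ↦ A * (b ^ M / 2 ^ M ^ 2)) atTop (𝓝 0) := by
    simpa using (tendsto_pow_div_two_pow_sq b).const_mul A
  exact norm_le_zero_iff.1 (ge_of_tendsto hlimit hbound)

end Grid

section BivariateEval

variable {R S : Type*} {m n : ℕ}

/-- The value at `(x, y)` of the polynomial `∑ c (a, b) X ^ a Y ^ b`, of degree less than `m` in `X`
and less than `n` in `Y`. A polynomial is a plain family of coefficients, so that the solutions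
provided by Siegel's lemma are polynomials. -/
def bivariateEval [CommSemiring R] (c : Fin m × Fin n → R) (x y : R) : R :=
  ∑ i, c i * (x ^ (i.1 : ℕ) * y ^ (i.2 : ℕ))

theorem map_bivariateEval [CommSemiring R] [CommSemiring S] (f : R →+* S)
    (c : Fin m × Fin n → R) (x y : R) :
    f (bivariateEval c x y) = bivariateEval (fun i ↦ f (c i)) (f x) (f y) := by
  simp [bivariateEval]

theorem bivariateEval_eq_sum_pow_mul_sum [CommSemiring R] (c : Fin m × Fin n → R) (x y : R) :
    bivariateEval c x y = ∑ a : Fin m, x ^ (a : ℕ) * ∑ b : Fin n, y ^ (b : ℕ) * c (a, b) := by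
  simp only [bivariateEval, Fintype.sum_prod_type, Finset.mul_sum]
  exact Finset.sum_congr rfl fun a _ ↦ Finset.sum_congr rfl fun b _ ↦ by ring

theorem norm_pow_mul_pow_le [SeminormedCommRing R] [NormOneClass R] {x y : R} {X Y : ℝ}
    (hX : 1 ≤ X) (hY : 1 ≤ Y) (hx : ‖x‖ ≤ X) (hy : ‖y‖ ≤ Y) {a b : ℕ} (ha : a ≤ m) (hb : b ≤ n) :
    ‖x ^ a * y ^ b‖ ≤ X ^ m * Y ^ n :=
  calc ‖x ^ a * y ^ b‖ ≤ ‖x‖ ^ a * ‖y‖ ^ b :=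
        norm_mul_le_of_le (norm_pow_le x a) (norm_pow_le y b)
    _ ≤ X ^ a * Y ^ b := by gcongr
    _ ≤ X ^ m * Y ^ n := by gcongr

theorem norm_bivariateEval_le_of_norm_monomial_le [SeminormedCommRing R] {c : Fin m × Fin n → R}
    {x y : R} {H Q : ℝ} (hc : ∀ i, ‖c i‖ ≤ H) (hxy : ∀ a ≤ m, ∀ b ≤ n, ‖x ^ a * y ^ b‖ ≤ Q) :
    ‖bivariateEval c x y‖ ≤ m * n * (H * Q) := by
  calc ‖bivariateEval c x y‖ ≤ ∑ _i : Fin m × Fin n, H * Q :=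
        norm_sum_le_of_le _ fun i _ ↦
          norm_mul_le_of_le (hc i) (hxy i.1 i.1.isLt.le i.2 i.2.isLt.le)
    _ = m * n * (H * Q) := by simp

theorem differentiable_bivariateEval_exp (l : ℂ) (c : Fin m × Fin n → ℂ) :
    Differentiable ℂ fun z ↦ bivariateEval c z (Complex.exp (l * z)) := by
  unfold bivariateEval
  fun_prop

theorem norm_bivariateEval_exp_le {c : Fin m × Fin n → ℂ} {H r X : ℝ} (l : ℂ) {z : ℂ}
    (hc : ∀ i, ‖c i‖ ≤ H) (hz : ‖z‖ ≤ r) (hX : 1 ≤ X) (hrX : r ≤ X) :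
    ‖bivariateEval c z (Complex.exp (l * z))‖ ≤
      m * n * (H * (X ^ m * Real.exp (‖l‖ * r) ^ n)) := by
  have hr : 0 ≤ r := (norm_nonneg z).trans hz
  have hexp : ‖Complex.exp (l * z)‖ ≤ Real.exp (‖l‖ * r) :=
    calc ‖Complex.exp (l * z)‖ ≤ Real.exp ‖l * z‖ := Complex.norm_exp_le_exp_norm _
      _ ≤ Real.exp (‖l‖ * r) := by rw [norm_mul]; gcongr
  exact norm_bivariateEval_le_of_norm_monomial_le hc fun a ha b hb ↦
    norm_pow_mul_pow_le hX (Real.one_le_exp (by positivity)) (hz.trans hrX) hexp ha hb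

-- Translating `z` by multiples of the period `2πi / l` fixes `exp (l * z)`.
theorem eq_zero_of_bivariateEval_exp_eq_zero {l : ℂ} (hl : l ≠ 0) {c : Fin m × Fin n → ℂ}
    (h : ∀ z, bivariateEval c z (Complex.exp (l * z)) = 0) : c = 0 := by
  have hinner (y : ℂ) (hy : y ≠ 0) (a : Fin m) : ∑ b : Fin n, y ^ (b : ℕ) * c (a, b) = 0 := by
    let z (j : Fin m) : ℂ := (Complex.log y + (j : ℕ) * (2 * Real.pi * Complex.I)) / l
    have hz_exp (j : Fin m) : Complex.exp (l * z j) = y := by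
      rw [mul_div_cancel₀ _ hl, Complex.exp_add, Complex.exp_nat_mul_two_pi_mul_I, mul_one,
        Complex.exp_log hy]
    have hz_inj : Function.Injective z := fun j j' hj ↦ by
      simpa [z, hl, Complex.two_pi_I_ne_zero, Fin.val_inj] using hj
    refine congrFun (Matrix.eq_zero_of_forall_index_sum_pow_mul_eq_zero
      (v := fun a ↦ ∑ b : Fin n, y ^ (b : ℕ) * c (a, b)) hz_inj fun j ↦ ?_) a
    rw [← bivariateEval_eq_sum_pow_mul_sum, ← hz_exp j]
    exact h (z j)
  funext ⟨a, b⟩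
  refine congrFun (Matrix.eq_zero_of_forall_index_sum_pow_mul_eq_zero (v := fun b ↦ c (a, b))
    (f := fun j : Fin n ↦ ((j + 1 : ℕ) : ℂ)) (fun j j' hj ↦ ?_) fun j ↦ ?_) b
  · simpa [Fin.val_inj] using hj
  · exact hinner _ (Nat.cast_ne_zero.2 (Nat.succ_ne_zero j)) a

theorem exists_bivariateEval_exp_grid_ne_zero {l α : ℂ} (hl : l ≠ 0) (hα : ∀ q : ℚ, α ≠ q)
    {c : Fin m × Fin n → ℂ} (hc : c ≠ 0) :
    ∃ s t : ℕ, bivariateEval c (s + t * α) (Complex.exp (l * (s + t * α))) ≠ 0 := by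
  by_contra! hgrid
  refine hc (eq_zero_of_bivariateEval_exp_eq_zero hl (congrFun ?_))
  refine eq_zero_of_eq_zero_on_grid_of_norm_le_exp (differentiable_bivariateEval_exp l c) hα hgrid
    (A := m * n * ‖c‖) (B := m + n * ‖l‖) fun z ↦ ?_
  calc ‖bivariateEval c z (Complex.exp (l * z))‖
      ≤ m * n * (‖c‖ * (Real.exp ‖z‖ ^ m * Real.exp (‖l‖ * ‖z‖) ^ n)) :=
        norm_bivariateEval_exp_le l (norm_le_pi_norm c) le_rfl (Real.one_le_exp (norm_nonneg z))
          ((lt_add_one _).le.trans (Real.add_one_le_exp _))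
    _ = m * n * ‖c‖ * Real.exp ((m + n * ‖l‖) * ‖z‖) := by
        rw [← Real.exp_nat_mul, ← Real.exp_nat_mul, ← Real.exp_add]
        ring_nf

end BivariateEval

section Arithmetic

variable {K : Type*} [Field K] [NumberField K]

theorem one_le_norm_mul_house_pow {z : 𝓞 K} (hz : z ≠ 0) (σ : K →+* ℂ) :
    1 ≤ ‖σ z‖ * house (z : K) ^ (Module.finrank ℚ K - 1) := by
  have hnorm : Algebra.norm ℤ z ≠ 0 := Algebra.norm_ne_zero_iff.2 hz
  calc (1 : ℝ) ≤ |Algebra.norm ℤ z| := by exact_mod_cast Int.one_le_abs hnorm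
    _ = ‖Algebra.norm ℚ (z : K)‖ := by
        rw [← Algebra.coe_norm_int, ← Rat.norm_cast_real]
        simp
    _ ≤ ‖σ z‖ * house (z : K) ^ (Module.finrank ℚ K - 1) :=
        norm_norm_le_norm_mul_house_pow _ σ

theorem isIntegral_mul_pow_mul_pow {R A : Type*} [CommRing R] [CommRing A] [Algebra R A]
    {d e x y : A} (hd : IsIntegral R d) (he : IsIntegral R e) (hx : IsIntegral R (d * x))
    (hy : IsIntegral R (e * y)) {a b m n : ℕ} (ha : a ≤ m) (hb : b ≤ n) :
    IsIntegral R (d ^ m * e ^ n * (x ^ a * y ^ b)) := by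
  obtain ⟨m, rfl⟩ := Nat.exists_eq_add_of_le ha
  obtain ⟨n, rfl⟩ := Nat.exists_eq_add_of_le hb
  have hsplit : d ^ (a + m) * e ^ (b + n) * (x ^ a * y ^ b) =
      d ^ m * e ^ n * ((d * x) ^ a * (e * y) ^ b) := by ring
  rw [hsplit]
  exact ((hd.pow m).mul (he.pow n)).mul ((hx.pow a).mul (hy.pow b))

theorem isIntegral_grid_monomial {R A : Type*} [CommRing R] [CommRing A] [Algebra R A]
    {d x β γ : A} (hd : IsIntegral R d) (hx : IsIntegral R (d * x)) (hβ : IsIntegral R (d * β))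
    (hγ : IsIntegral R (d * γ)) {m n M s t a b : ℕ} (hs : s ≤ M) (ht : t ≤ M) (ha : a ≤ m)
    (hb : b ≤ n) :
    IsIntegral R (d ^ m * (d ^ M * d ^ M) ^ n * ((s + t * x) ^ a * (β ^ s * γ ^ t) ^ b)) := by
  have hpoint : IsIntegral R (d * (s + t * x)) := by
    rw [mul_add, mul_left_comm]
    exact (hd.mul (isIntegral_natCast s)).add ((isIntegral_natCast t).mul hx)
  exact isIntegral_mul_pow_mul_pow hd ((hd.pow M).mul (hd.pow M)) hpoint
    (isIntegral_mul_pow_mul_pow hd hd hβ hγ hs ht) ha hb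

theorem exists_siegel_constant (K : Type*) [Field K] [NumberField K] :
    ∃ C : ℝ, ∀ {ι κ : Type*} [Fintype ι] [Fintype κ] [Nonempty ι],
      Fintype.card κ = 2 * Fintype.card ι → ∀ a : Matrix ι κ (𝓞 K), a ≠ 0 →
      ∀ {A : ℝ}, (∀ i j, house (a i j : K) ≤ A) →
      ∃ ξ : κ → 𝓞 K, ξ ≠ 0 ∧ a.mulVec ξ = 0 ∧
        ∀ j, house (ξ j : K) ≤ C * (Fintype.card κ * A) := by
  classical
  obtain ⟨c, hc⟩ : ∃ c : ℝ, ∀ {ι κ : Type _} [Fintype ι] [Fintype κ] [Nonempty ι],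
      Fintype.card ι < Fintype.card κ → ∀ a : Matrix ι κ (𝓞 K), a ≠ 0 →
      ∀ {A : ℝ}, (∀ i j, house (a i j : K) ≤ A) →
      ∃ ξ : κ → 𝓞 K, ξ ≠ 0 ∧ a.mulVec ξ = 0 ∧ ∀ j, house (ξ j : K) ≤
        c * (c * Fintype.card κ * A) ^
          ((Fintype.card ι : ℝ) / (Fintype.card κ - Fintype.card ι)) :=
    ⟨_, fun hcard a ha _ hA ↦ house.exists_ne_zero_int_vec_house_le K a ha Fintype.card_pos hcard
      rfl hA rfl⟩
  refine ⟨c ^ 2, fun {ι κ} _ _ _ hcard a ha A hA ↦ ?_⟩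
  have hι : 0 < Fintype.card ι := Fintype.card_pos
  obtain ⟨ξ, hξ₀, hξ, hbound⟩ := hc (by lia) a ha hA
  refine ⟨ξ, hξ₀, hξ, fun j ↦ (hbound j).trans_eq ?_⟩
  have hexponent : (Fintype.card ι : ℝ) / (Fintype.card κ - Fintype.card ι) = 1 := by
    rw [hcard]
    push_cast
    field_simp
    ring
  rw [hexponent, Real.rpow_one]
  ring

theorem exists_bivariateEval_eq_zero_constant (K : Type*) [Field K] [NumberField K] :
    ∃ C : ℝ, ∀ {ι : Type} [Fintype ι] [Nonempty ι] {m n : ℕ} (u v : ι → K) {δ : ℤ} {A B : ℝ},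
      m * n = 2 * Fintype.card ι → δ ≠ 0 → |(δ : ℝ)| ≤ B →
      (∀ i, ∀ a ≤ m, ∀ b ≤ n, IsIntegral ℤ (δ * (u i ^ a * v i ^ b)) ∧
        house (u i ^ a * v i ^ b) ≤ A) →
      ∃ ξ : Fin m × Fin n → 𝓞 K, ξ ≠ 0 ∧
        (∀ i, bivariateEval (fun j ↦ (ξ j : K)) (u i) (v i) = 0) ∧
        ∀ j, house (ξ j : K) ≤ C * (m * n * (B * A)) := by
  obtain ⟨C, hC⟩ := exists_siegel_constant.{_, 0, 0} K
  refine ⟨C, fun {ι} _ _ {m n} u v {δ A B} hcard hδ hB hA ↦ ?_⟩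
  have hδK : (δ : K) ≠ 0 := Int.cast_ne_zero.2 hδ
  let a : Matrix ι (Fin m × Fin n) (𝓞 K) := fun i j ↦
    ⟨_, (hA i j.1 j.1.isLt.le j.2 j.2.isLt.le).1⟩
  have ha_coe (i : ι) (j : Fin m × Fin n) :
      (a i j : K) = δ * (u i ^ (j.1 : ℕ) * v i ^ (j.2 : ℕ)) := rfl
  have ha : a ≠ 0 := fun h ↦ by
    have hmn : 0 < m * n := hcard ▸ Nat.mul_pos two_pos Fintype.card_pos
    have hentry := ha_coe (Classical.arbitrary ι)
      (⟨0, Nat.pos_of_mul_pos_right hmn⟩, ⟨0, Nat.pos_of_mul_pos_left hmn⟩)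
    simp [h, hδK.symm] at hentry
  have ha_house (i : ι) (j : Fin m × Fin n) : house (a i j : K) ≤ B * A :=
    calc house (a i j : K) ≤ |(δ : ℝ)| * house (u i ^ (j.1 : ℕ) * v i ^ (j.2 : ℕ)) := by
          simpa [ha_coe] using house_mul_le (δ : K) (u i ^ (j.1 : ℕ) * v i ^ (j.2 : ℕ))
      _ ≤ B * A :=
          mul_le_mul hB (hA i j.1 j.1.isLt.le j.2 j.2.isLt.le).2 (house_nonneg _)
            ((abs_nonneg _).trans hB)
  obtain ⟨ξ, hξ₀, hξ, hbound⟩ := hC (by simpa using hcard) a ha ha_house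
  refine ⟨ξ, hξ₀, fun i ↦ (mul_eq_zero.1 ?_).resolve_left hδK, by simpa using hbound⟩
  have hrow := congrArg (algebraMap (𝓞 K) K) (congrFun hξ i)
  simp only [Matrix.mulVec, dotProduct, Pi.zero_apply, map_zero, map_sum, map_mul, ha_coe] at hrow
  rw [bivariateEval, Finset.mul_sum, ← hrow]
  exact Finset.sum_congr rfl fun j _ ↦ by ring

end Arithmetic

section Parameters

theorem exists_le_pow (B : ℝ) : ∃ k : ℕ, ∀ x : ℝ, 2 ≤ x → B ≤ x ^ k := by
  obtain ⟨k, hk⟩ := pow_unbounded_of_one_lt B one_lt_two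
  exact ⟨k, fun x hx ↦ hk.le.trans (by gcongr)⟩

theorem pow_three_le_mul {N M : ℕ} (hNM : N ^ 2 ≤ M) : N ^ 3 ≤ N * M :=
  calc N ^ 3 = N * N ^ 2 := by ring
    _ ≤ N * M := by gcongr

theorem cast_pow_three_mul_two_mul_le {N M : ℕ} (hN : 2 ≤ N) (hNM : N ^ 2 ≤ M) :
    ((N ^ 3 : ℕ) : ℝ) * (2 * N : ℕ) ≤ (M : ℝ) ^ (N * M) := by
  have hM : 2 ≤ M := by nlinarith
  have hNM3 : 3 ≤ N * M := by nlinarith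
  have hnat : N ^ 3 * (2 * N) ≤ M ^ (N * M) :=
    calc N ^ 3 * (2 * N) = 2 * (N ^ 2) ^ 2 := by ring
      _ ≤ M * M ^ 2 := by gcongr
      _ = M ^ 3 := by ring
      _ ≤ M ^ (N * M) := Nat.pow_le_pow_right (by lia) hNM3
  exact_mod_cast hnat

theorem sq_pow_le_pow {N M : ℕ} (hN : 0 < N) (hNM : N ^ 2 ≤ M) (h : ℕ) :
    ((N ^ 2 : ℕ) : ℝ) ^ (h * (N * N ^ 2)) ≤ (M : ℝ) ^ (h * (N * M)) := by
  have hN_sq : (1 : ℝ) ≤ (N ^ 2 : ℕ) := Nat.one_le_cast.2 (Nat.one_le_pow _ _ hN)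
  calc ((N ^ 2 : ℕ) : ℝ) ^ (h * (N * N ^ 2)) ≤ ((N ^ 2 : ℕ) : ℝ) ^ (h * (N * M)) := by gcongr
    _ ≤ (M : ℝ) ^ (h * (N * M)) := by gcongr

theorem eventually_pow_mul_lt_two_pow_sq (k : ℕ) :
    ∀ᶠ N : ℕ in atTop, ∀ M : ℕ, N ^ 2 ≤ M → (M : ℝ) ^ (k * (N * M)) < 2 ^ M ^ 2 := by
  have hlog2 : 0 < Real.log 2 := Real.log_pos one_lt_two
  have hlittle : (fun x : ℝ ↦ (k : ℝ) * Real.log x) =o[atTop] fun x : ℝ ↦ x ^ (1 / 2 : ℝ) :=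
    (isLittleO_log_rpow_atTop (by norm_num)).const_mul_left _
  have hsqrt : ∀ᶠ x : ℝ in atTop, k * Real.log x ≤ Real.log 2 / 2 * √x := by
    filter_upwards [hlittle.def (half_pos hlog2), eventually_ge_atTop 0] with x hx hx₀
    rw [← Real.sqrt_eq_rpow, Real.norm_of_nonneg (Real.sqrt_nonneg x)] at hx
    exact (Real.le_norm_self _).trans hx
  have hnat : ∀ᶠ M : ℕ in atTop, 0 < M ∧ k * Real.log M ≤ Real.log 2 / 2 * √M :=
    (eventually_gt_atTop 0).and (tendsto_natCast_atTop_atTop.eventually hsqrt)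
  obtain ⟨M₀, hM₀⟩ := eventually_atTop.1 hnat
  filter_upwards [eventually_ge_atTop M₀] with N hN M hNM
  obtain ⟨hM, hlog⟩ := hM₀ M (by nlinarith)
  have hN_sqrt : (N : ℝ) ≤ √M := Real.le_sqrt_of_sq_le (by exact_mod_cast hNM)
  rw [← Real.log_lt_log_iff (by positivity) (by positivity), Real.log_pow, Real.log_pow]
  push_cast
  calc k * (N * M) * Real.log M = N * M * (k * Real.log M) := by ring
    _ ≤ √M * M * (Real.log 2 / 2 * √M) := by gcongr
    _ = (√M * √M) * M * (Real.log 2 / 2) := by ring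
    _ = M ^ 2 * (Real.log 2 / 2) := by rw [Real.mul_self_sqrt (by positivity), sq]
    _ < M ^ 2 * Real.log 2 := by gcongr; linarith

theorem exists_maximal_square {P : ℕ → ℕ → Prop} (h : ∃ s t, ¬ P s t) :
    ∃ M, (∀ s < M, ∀ t < M, P s t) ∧ ∃ s ≤ M, ∃ t ≤ M, ¬ P s t := by
  classical
  have hM : ∃ M, ∃ s ≤ M, ∃ t ≤ M, ¬ P s t := by
    obtain ⟨s, t, hst⟩ := h
    exact ⟨max s t, s, le_max_left s t, t, le_max_right s t, hst⟩
  refine ⟨Nat.find hM, fun s hs t ht ↦ ?_, Nat.find_spec hM⟩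
  by_contra hst
  exact Nat.find_min hM (max_lt hs ht) ⟨s, le_max_left s t, t, le_max_right s t, hst⟩

end Parameters

section Estimates

variable {K : Type*} [Field K] [NumberField K]

theorem house_grid_monomial_le (x β γ : K) {m n M s t a b : ℕ} {H : ℝ} (hM : 1 ≤ M) (hH : 1 ≤ H)
    (hx : 1 + house x ≤ H) (hβ : house β ≤ H) (hγ : house γ ≤ H) (hs : s ≤ M) (ht : t ≤ M)
    (ha : a ≤ m) (hb : b ≤ n) :
    house ((s + t * x) ^ a * (β ^ s * γ ^ t) ^ b) ≤ (M * H) ^ m * (H ^ M * H ^ M) ^ n := by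
  have hM' : (1 : ℝ) ≤ M := Nat.one_le_cast.2 hM
  have hpoint : house (s + t * x) ≤ M * H :=
    calc house (s + t * x) ≤ M * (1 + house x) := by
          simpa [house] using norm_natCast_add_natCast_mul_le (canonicalEmbedding K x) hs ht
      _ ≤ M * H := by gcongr
  have hpower : house (β ^ s * γ ^ t) ≤ H ^ M * H ^ M := by
    simpa [house] using norm_pow_mul_pow_le (x := canonicalEmbedding K β)
      (y := canonicalEmbedding K γ) hH hH hβ hγ hs ht
  have hH_pow : 1 ≤ H ^ M := one_le_pow₀ hH
  simpa [house] using norm_pow_mul_pow_le (x := canonicalEmbedding K (s + t * x))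
    (y := canonicalEmbedding K (β ^ s * γ ^ t)) (one_le_mul_of_one_le_of_one_le hM' hH)
    (one_le_mul_of_one_le_of_one_le hH_pow hH_pow) hpoint hpower ha hb

theorem exists_grid_size_bound (x β γ : K) :
    ∃ k : ℕ, ∀ N M : ℕ, 2 ≤ N → N ^ 2 ≤ M → ∃ δ : ℤ, δ ≠ 0 ∧ |(δ : ℝ)| ≤ M ^ (k * (N * M)) ∧
      ∀ s ≤ M, ∀ t ≤ M, ∀ a ≤ N ^ 3, ∀ b ≤ 2 * N,
        IsIntegral ℤ ((δ : K) * ((s + t * x) ^ a * (β ^ s * γ ^ t) ^ b)) ∧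
        house ((s + t * x) ^ a * (β ^ s * γ ^ t) ^ b) ≤ M ^ (k * (N * M)) := by
  classical
  obtain ⟨D, hD₀, hD⟩ := exists_integral_multiples ℤ ℚ ({x, β, γ} : Finset K)
  simp only [Finset.mem_insert, Finset.mem_singleton, forall_eq_or_imp, forall_eq, zsmul_eq_mul]
    at hD
  obtain ⟨hDx, hDβ, hDγ⟩ := hD
  obtain ⟨k, hk⟩ := exists_le_pow (|(D : ℝ)| + (1 + house x) + house β + house γ)
  refine ⟨5 * k + 1, fun N M hN hNM ↦ ?_⟩
  have hM : 2 ≤ M := by nlinarith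
  have hM₁ : (1 : ℝ) ≤ M := Nat.one_le_cast.2 (by lia)
  have hN3 := pow_three_le_mul hNM
  have hsum := hk M (Nat.ofNat_le_cast.2 hM)
  have hD_nonneg := abs_nonneg (D : ℝ)
  have hx₀ := house_nonneg x
  have hβ₀ := house_nonneg β
  have hγ₀ := house_nonneg γ
  have hD_le : |(D : ℝ)| ≤ M ^ k := by linarith
  refine ⟨D ^ N ^ 3 * (D ^ M * D ^ M) ^ (2 * N), by positivity, ?_,
    fun s hs t ht a ha b hb ↦ ⟨?_, ?_⟩⟩
  · push_cast
    simp only [abs_mul, abs_pow]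
    calc |(D : ℝ)| ^ N ^ 3 * (|(D : ℝ)| ^ M * |(D : ℝ)| ^ M) ^ (2 * N)
        ≤ ((M : ℝ) ^ k) ^ N ^ 3 * (((M : ℝ) ^ k) ^ M * ((M : ℝ) ^ k) ^ M) ^ (2 * N) := by gcongr
      _ = (M : ℝ) ^ (k * N ^ 3 + 4 * k * (N * M)) := by ring
      _ ≤ (M : ℝ) ^ ((5 * k + 1) * (N * M)) := by gcongr; nlinarith
  · push_cast
    exact isIntegral_grid_monomial (isIntegral_intCast D) hDx hDβ hDγ hs ht ha hb
  · calc house ((s + t * x) ^ a * (β ^ s * γ ^ t) ^ b)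
        ≤ (M * (M : ℝ) ^ k) ^ N ^ 3 * (((M : ℝ) ^ k) ^ M * ((M : ℝ) ^ k) ^ M) ^ (2 * N) :=
          house_grid_monomial_le x β γ (by lia) (one_le_pow₀ hM₁) (by linarith) (by linarith)
            (by linarith) hs ht ha hb
      _ = (M : ℝ) ^ ((k + 1) * N ^ 3 + 4 * k * (N * M)) := by ring
      _ ≤ (M : ℝ) ^ ((5 * k + 1) * (N * M)) := by gcongr; nlinarith

theorem exists_auxiliary_polynomial (x β γ : K) :
    ∃ h : ℕ, ∀ N : ℕ, 2 ≤ N → ∃ ξ : Fin (N ^ 3) × Fin (2 * N) → 𝓞 K, ξ ≠ 0 ∧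
      (∀ s < N ^ 2, ∀ t < N ^ 2,
        bivariateEval (fun i ↦ (ξ i : K)) (s + t * x) (β ^ s * γ ^ t) = 0) ∧
      ∀ i, house (ξ i : K) ≤ ((N ^ 2 : ℕ) : ℝ) ^ (h * (N * N ^ 2)) := by
  obtain ⟨C, hC⟩ := exists_bivariateEval_eq_zero_constant K
  obtain ⟨k, hk⟩ := exists_grid_size_bound x β γ
  obtain ⟨j, hj⟩ := exists_le_pow C
  refine ⟨j + 1 + 2 * k, fun N hN ↦ ?_⟩
  obtain ⟨δ, hδ₀, hδ, hmonomial⟩ := hk N (N ^ 2) hN le_rfl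
  have hM : 2 ≤ N ^ 2 := hN.trans (Nat.le_self_pow two_ne_zero N)
  set M := N ^ 2
  have hM₁ : (1 : ℝ) ≤ M := Nat.one_le_cast.2 (by lia)
  have hNM : 0 < N * M := by positivity
  have : NeZero M := ⟨by lia⟩
  obtain ⟨ξ, hξ₀, hξ, hbound⟩ := hC (ι := Fin M × Fin M)
    (fun i ↦ i.1 + i.2 * x) (fun i ↦ β ^ (i.1 : ℕ) * γ ^ (i.2 : ℕ)) (by simp [M]; ring) hδ₀ hδ
    (fun i ↦ hmonomial i.1 i.1.isLt.le i.2 i.2.isLt.le)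
  refine ⟨ξ, hξ₀, fun s hs t ht ↦ hξ (⟨s, hs⟩, ⟨t, ht⟩), fun i ↦ (hbound i).trans ?_⟩
  calc C * ((N ^ 3 : ℕ) * (2 * N : ℕ) * ((M : ℝ) ^ (k * (N * M)) * (M : ℝ) ^ (k * (N * M))))
      ≤ (M : ℝ) ^ j *
          ((M : ℝ) ^ (N * M) * ((M : ℝ) ^ (k * (N * M)) * (M : ℝ) ^ (k * (N * M)))) := by
        gcongr
        · exact hj M (Nat.ofNat_le_cast.2 hM)
        · exact cast_pow_three_mul_two_mul_le hN le_rfl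
    _ = (M : ℝ) ^ (j + (N * M + 2 * k * (N * M))) := by ring
    _ ≤ (M : ℝ) ^ ((j + 1 + 2 * k) * (N * M)) := by gcongr; nlinarith

theorem exists_one_le_norm_bivariateEval_mul_pow (σ : K →+* ℂ) (x β γ : K) (h : ℕ) :
    ∃ k : ℕ, ∀ N M : ℕ, 2 ≤ N → N ^ 2 ≤ M → ∀ ξ : Fin (N ^ 3) × Fin (2 * N) → 𝓞 K,
      (∀ i, house (ξ i : K) ≤ M ^ (h * (N * M))) → ∀ s ≤ M, ∀ t ≤ M,
      bivariateEval (fun i ↦ (ξ i : K)) (s + t * x) (β ^ s * γ ^ t) ≠ 0 →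
      1 ≤ ‖σ (bivariateEval (fun i ↦ (ξ i : K)) (s + t * x) (β ^ s * γ ^ t))‖ *
        M ^ (k * (N * M)) := by
  obtain ⟨k, hk⟩ := exists_grid_size_bound x β γ
  set d := Module.finrank ℚ K - 1
  refine ⟨k + (2 * k + h + 1) * d, fun N M hN hNM ξ hξ s hs t ht hne ↦ ?_⟩
  obtain ⟨δ, hδ₀, hδ, hmonomial⟩ := hk N M hN hNM
  set z := bivariateEval (fun i ↦ (ξ i : K)) (s + t * x) (β ^ s * γ ^ t) with hz
  have hint : IsIntegral ℤ (δ * z) := by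
    rw [hz, bivariateEval, Finset.mul_sum]
    refine IsIntegral.sum _ fun i _ ↦ ?_
    rw [mul_left_comm]
    exact (RingOfIntegers.isIntegral_coe (ξ i)).mul
      (hmonomial s hs t ht i.1 i.1.isLt.le i.2 i.2.isLt.le).1
  have hz_house : house z ≤ M ^ (N * M) * (M ^ (h * (N * M)) * M ^ (k * (N * M))) := by
    calc house z ≤ (N ^ 3 : ℕ) * (2 * N : ℕ) * (M ^ (h * (N * M)) * M ^ (k * (N * M))) := by
          rw [house, hz, map_bivariateEval]
          refine norm_bivariateEval_le_of_norm_monomial_le hξ fun a ha b hb ↦ ?_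
          simpa [house] using (hmonomial s hs t ht a ha b hb).2
      _ ≤ _ := by gcongr; exact cast_pow_three_mul_two_mul_le hN hNM
  have hhouse : house (δ * z) ≤ M ^ ((2 * k + h + 1) * (N * M)) :=
    calc house (δ * z) ≤ |(δ : ℝ)| * house z := by
          simpa using house_mul_le (δ : K) z
      _ ≤ M ^ (k * (N * M)) * (M ^ (N * M) * (M ^ (h * (N * M)) * M ^ (k * (N * M)))) := by
          gcongr
          exact house_nonneg z
      _ = M ^ ((2 * k + h + 1) * (N * M)) := by ring
  have hliouville := one_le_norm_mul_house_pow (z := ⟨δ * z, hint⟩)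
    (RingOfIntegers.coe_ne_zero_iff.1 (mul_ne_zero (Int.cast_ne_zero.2 hδ₀) hne)) σ
  calc 1 ≤ ‖σ (δ * z)‖ * house (δ * z) ^ d := hliouville
    _ = |(δ : ℝ)| * ‖σ z‖ * house (δ * z) ^ d := by simp
    _ ≤ M ^ (k * (N * M)) * ‖σ z‖ * (M ^ ((2 * k + h + 1) * (N * M))) ^ d := by
        have := house_nonneg (δ * z)
        gcongr
    _ = ‖σ z‖ * M ^ ((k + (2 * k + h + 1) * d) * (N * M)) := by ring

theorem exists_norm_bivariateEval_exp_mul_two_pow_sq_le (l : ℂ) {α : ℂ} (hα : ∀ q : ℚ, α ≠ q)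
    (h : ℕ) :
    ∃ k : ℕ, ∀ N M : ℕ, 2 ≤ N → N ^ 2 ≤ M → ∀ c : Fin (N ^ 3) × Fin (2 * N) → ℂ,
      (∀ i, ‖c i‖ ≤ M ^ (h * (N * M))) →
      (∀ s < M, ∀ t < M, bivariateEval c (s + t * α) (Complex.exp (l * (s + t * α))) = 0) →
      ∀ s ≤ M, ∀ t ≤ M,
      ‖bivariateEval c (s + t * α) (Complex.exp (l * (s + t * α)))‖ * 2 ^ M ^ 2 ≤
        M ^ (k * (N * M)) := by
  set ρ : ℝ := 5 * (1 + ‖α‖)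
  obtain ⟨j, hj⟩ := exists_le_pow ρ
  obtain ⟨k, hk⟩ := exists_le_pow (Real.exp (‖l‖ * ρ))
  refine ⟨h + j + 2 * k + 2, fun N M hN hNM c hc hgrid s hs t ht ↦ ?_⟩
  have hM : 2 ≤ M := by nlinarith
  have hM₁ : (1 : ℝ) ≤ M := Nat.one_le_cast.2 (by lia)
  have hM₂ : (2 : ℝ) ≤ M := Nat.ofNat_le_cast.2 hM
  refine norm_mul_two_pow_sq_le_of_eq_zero_on_grid
    (F := fun z ↦ bivariateEval c z (Complex.exp (l * z)))
    (differentiable_bivariateEval_exp l c) hα (by lia) hgrid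
    (norm_natCast_add_natCast_mul_le α hs ht) fun z hz ↦ ?_
  have hradius : 5 * (M * (1 + ‖α‖)) = M * ρ := by ring
  rw [hradius] at hz
  have hρ : M * ρ ≤ (M : ℝ) ^ (j + 1) := by
    rw [pow_succ']
    gcongr
    exact hj M hM₂
  have hexp : Real.exp (‖l‖ * (M * ρ)) ≤ ((M : ℝ) ^ k) ^ M := by
    rw [mul_left_comm, Real.exp_nat_mul]
    gcongr
    exact hk M hM₂
  calc ‖bivariateEval c z (Complex.exp (l * z))‖
      ≤ (N ^ 3 : ℕ) * (2 * N : ℕ) * ((M : ℝ) ^ (h * (N * M)) *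
          (((M : ℝ) ^ (j + 1)) ^ N ^ 3 * Real.exp (‖l‖ * (M * ρ)) ^ (2 * N))) :=
        norm_bivariateEval_exp_le l hc hz.le (one_le_pow₀ hM₁) hρ
    _ ≤ (M : ℝ) ^ (N * M) * ((M : ℝ) ^ (h * (N * M)) *
          (((M : ℝ) ^ (j + 1)) ^ (N * M) * (((M : ℝ) ^ k) ^ M) ^ (2 * N))) := by
        gcongr
        · exact cast_pow_three_mul_two_mul_le hN hNM
        · exact one_le_pow₀ hM₁
        · exact pow_three_le_mul hNM
    _ = (M : ℝ) ^ ((h + j + 2 * k + 2) * (N * M)) := by ring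

end Estimates

section Conclusion

variable {K : Type*} [Field K] [NumberField K] (σ : K →+* ℂ) {l : ℂ} {x β γ : K}

theorem map_bivariateEval_grid {m n : ℕ} (hβ : Complex.exp l = σ β)
    (hγ : Complex.exp (l * σ x) = σ γ) (c : Fin m × Fin n → K) (s t : ℕ) :
    σ (bivariateEval c (s + t * x) (β ^ s * γ ^ t)) =
      bivariateEval (fun i ↦ σ (c i)) (s + t * σ x) (Complex.exp (l * (s + t * σ x))) := by
  have hexp : Complex.exp (l * (s + t * σ x)) = σ β ^ s * σ γ ^ t := by
    rw [← hβ, ← hγ, ← Complex.exp_nat_mul, ← Complex.exp_nat_mul, ← Complex.exp_add]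
    ring_nf
  simp [map_bivariateEval, hexp]

theorem exists_auxiliary_polynomial_of_maximal_square (hl : l ≠ 0) (hα : ∀ q : ℚ, σ x ≠ q)
    (hβ : Complex.exp l = σ β) (hγ : Complex.exp (l * σ x) = σ γ) :
    ∃ h : ℕ, ∀ N : ℕ, 2 ≤ N → ∃ M, N ^ 2 ≤ M ∧ ∃ ξ : Fin (N ^ 3) × Fin (2 * N) → 𝓞 K,
      (∀ i, house (ξ i : K) ≤ (M : ℝ) ^ (h * (N * M))) ∧
      (∀ s < M, ∀ t < M, bivariateEval (fun i ↦ (ξ i : K)) (s + t * x) (β ^ s * γ ^ t) = 0) ∧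
      ∃ s ≤ M, ∃ t ≤ M, bivariateEval (fun i ↦ (ξ i : K)) (s + t * x) (β ^ s * γ ^ t) ≠ 0 := by
  obtain ⟨h, haux⟩ := exists_auxiliary_polynomial x β γ
  refine ⟨h, fun N hN ↦ ?_⟩
  obtain ⟨ξ, hξ₀, hξ, hξ_house⟩ := haux N hN
  have hσξ : (fun i ↦ σ (ξ i)) ≠ 0 := by
    simpa [funext_iff] using hξ₀
  obtain ⟨s₀, t₀, hne₀⟩ := exists_bivariateEval_exp_grid_ne_zero hl hα hσξ
  rw [← map_bivariateEval_grid σ hβ hγ (fun i ↦ (ξ i : K))] at hne₀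
  obtain ⟨M, hzero, s, hs, t, ht, hne⟩ := exists_maximal_square
    (P := fun s t ↦ bivariateEval (fun i ↦ (ξ i : K)) (s + t * x) (β ^ s * γ ^ t) = 0)
    ⟨s₀, t₀, ne_zero_of_map hne₀⟩
  have hNM : N ^ 2 ≤ M := by
    by_contra! hMN
    exact hne (hξ s (hs.trans_lt hMN) t (ht.trans_lt hMN))
  exact ⟨M, hNM, ξ, fun i ↦ (hξ_house i).trans (sq_pow_le_pow (by lia) hNM h), hzero, s, hs, t, ht,
    hne⟩

theorem exists_rat_eq_of_exp_eq (hl : l ≠ 0) (hβ : Complex.exp l = σ β)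
    (hγ : Complex.exp (l * σ x) = σ γ) : ∃ q : ℚ, σ x = q := by
  by_contra! hα
  obtain ⟨h, haux⟩ := exists_auxiliary_polynomial_of_maximal_square σ hl hα hβ hγ
  obtain ⟨k₁, hlower⟩ := exists_one_le_norm_bivariateEval_mul_pow σ x β γ h
  obtain ⟨k₂, hupper⟩ := exists_norm_bivariateEval_exp_mul_two_pow_sq_le l hα h
  obtain ⟨N, hN, hN₂⟩ :=
    ((eventually_pow_mul_lt_two_pow_sq (k₁ + k₂)).and (eventually_ge_atTop 2)).exists
  obtain ⟨M, hNM, ξ, hξ_house, hzero, s, hs, t, ht, hne⟩ := haux N hN₂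
  have hvalue := map_bivariateEval_grid σ hβ hγ fun i ↦ (ξ i : K)
  have hlow := hlower N M hN₂ hNM ξ hξ_house s hs t ht hne
  have hupp := hupper N M hN₂ hNM (fun i ↦ σ (ξ i))
    (fun i ↦ (norm_embedding_le_house _ σ).trans (hξ_house i))
    (fun s hs t ht ↦ by rw [← hvalue, hzero s hs t ht, map_zero]) s hs t ht
  rw [← hvalue] at hupp
  set v := σ (bivariateEval (fun i ↦ (ξ i : K)) (s + t * x) (β ^ s * γ ^ t))
  refine (hN M hNM).not_ge ?_
  calc (2 : ℝ) ^ M ^ 2 ≤ ‖v‖ * M ^ (k₁ * (N * M)) * 2 ^ M ^ 2 :=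
        le_mul_of_one_le_left (by positivity) hlow
    _ = M ^ (k₁ * (N * M)) * (‖v‖ * 2 ^ M ^ 2) := by ring
    _ ≤ M ^ (k₁ * (N * M)) * M ^ (k₂ * (N * M)) := by gcongr
    _ = M ^ ((k₁ + k₂) * (N * M)) := by ring

end Conclusion

end GelfondSchneider

theorem rational_of_algebraic_and_exp_algebraic_general {l α : ℂ} (hl : l ≠ 0)
    (hβ : IsAlgebraic ℚ (Complex.exp l)) (hα : IsAlgebraic ℚ α)
    (hγ : IsAlgebraic ℚ (Complex.exp (l * α))) : ∃ q : ℚ, α = q := by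
  let S : Set ℂ := {α, Complex.exp l, Complex.exp (l * α)}
  let K := IntermediateField.adjoin ℚ S
  have hfinite : FiniteDimensional ℚ K := IntermediateField.finiteDimensional_adjoin <| by
    rintro z (rfl | rfl | rfl)
    exacts [hα.isIntegral, hβ.isIntegral, hγ.isIntegral]
  have : NumberField K := ⟨⟩
  have hmem {z : ℂ} (hz : z ∈ S) : z ∈ K := IntermediateField.subset_adjoin ℚ S hz
  exact GelfondSchneider.exists_rat_eq_of_exp_eq (algebraMap K ℂ) hl (x := ⟨α, hmem (by simp [S])⟩)
    (β := ⟨_, hmem (by simp [S])⟩) (γ := ⟨_, hmem (by simp [S])⟩) rfl rfl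

/-- Gelfond–Schneider consequence: if `α` and `e^{2π√-1 α}` are both algebraic
over `ℚ`, then `α` is rational. -/
theorem rational_of_algebraic_and_exp_algebraic (α : ℂ)
    (h1 : IsAlgebraic ℚ α)
    (h2 : IsAlgebraic ℚ (Complex.exp (2 * (Real.pi : ℂ) * Complex.I * α))) :
    ∃ q : ℚ, α = (q : ℂ) :=
  rational_of_algebraic_and_exp_algebraic_general Complex.two_pi_I_ne_zero
    (by simp [Complex.exp_two_pi_mul_I, isAlgebraic_one]) h1 h2
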